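/- Let Ω, Ω' ⊆ ℝ³ be open, let f = (F, f₃) : Ω' → ℝ³ be a smooth map satisfying the contact equations with J_F > 0 on Ω', and let g = (G, g₃) : Ω → Ω' be a smooth conformal map. Then the right cocycle condition S_CR(f ∘ g) = (S_CR(f) ∘ g) · (ZG)² holds on Ω. -/

import Mathlib

noncomputable section

open Complex

/-- The underlying space of the first Heisenberg group: ℝ³ with coordinates (x, y, t). -/
abbrev Heis : Type := ℝ × ℝ × ℝ

/-- The left-invariant vector field X = ∂/∂x + 2y ∂/∂t, as a derivation. -/
def XD {E : Type*} [NormedAddCommGroup E] [NormedSpace ℝ E] (u : Heis → E) (p : Heis) : E :=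
  fderiv ℝ u p (1, 0, 2 * p.2.1)

/-- The left-invariant vector field Y = ∂/∂y − 2x ∂/∂t, as a derivation. -/
def YD {E : Type*} [NormedAddCommGroup E] [NormedSpace ℝ E] (u : Heis → E) (p : Heis) : E :=
  fderiv ℝ u p (0, 1, -(2 * p.1))

/-- The vector field T = ∂/∂t, as a derivation. -/
def TD {E : Type*} [NormedAddCommGroup E] [NormedSpace ℝ E] (u : Heis → E) (p : Heis) : E :=
  fderiv ℝ u p (0, 0, 1)

/-- Z = (X − iY)/2. -/
def ZD (u : Heis → ℂ) (p : Heis) : ℂ := (XD u p - Complex.I * YD u p) / 2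

/-- Z̄ = (X + iY)/2. -/
def ZbD (u : Heis → ℂ) (p : Heis) : ℂ := (XD u p + Complex.I * YD u p) / 2

/-- The complexification F = f₁ + i f₂ of the horizontal components. -/
def CF (f1 f2 : Heis → ℝ) : Heis → ℂ := fun p => (f1 p : ℂ) + (f2 p : ℂ) * Complex.I

/-- Complexification of a real-valued function. -/
def Cplx (u : Heis → ℝ) : Heis → ℂ := fun p => (u p : ℂ)

/-- The horizontal Jacobian J_F = Xf₁·Yf₂ − Yf₁·Xf₂. -/
def JF (f1 f2 : Heis → ℝ) (p : Heis) : ℝ := XD f1 p * YD f2 p - YD f1 p * XD f2 p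

/-- The contact equations on Ω. -/
def ContactOn (f1 f2 f3 : Heis → ℝ) (Ω : Set Heis) : Prop :=
  ∀ p ∈ Ω, XD f3 p - 2 * f2 p * XD f1 p + 2 * f1 p * XD f2 p = 0 ∧
           YD f3 p - 2 * f2 p * YD f1 p + 2 * f1 p * YD f2 p = 0

/-- f = (f₁,f₂,f₃) is conformal on Ω: smooth, contact, J_F > 0, and the conformality
equations hold. -/
def ConformalOn (f1 f2 f3 : Heis → ℝ) (Ω : Set Heis) : Prop :=
  ContDiffOn ℝ (⊤ : ℕ∞) f1 Ω ∧ ContDiffOn ℝ (⊤ : ℕ∞) f2 Ω ∧ ContDiffOn ℝ (⊤ : ℕ∞) f3 Ω ∧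
  ContactOn f1 f2 f3 Ω ∧ (∀ p ∈ Ω, 0 < JF f1 f2 p) ∧
  ∀ p ∈ Ω, (XD f1 p) ^ 2 + (XD f2 p) ^ 2 = (YD f1 p) ^ 2 + (YD f2 p) ^ 2 ∧
           XD f1 p * YD f1 p + XD f2 p * YD f2 p = 0

/-- The sub-Laplacian Δ_H = X² + Y². -/
def LapH {E : Type*} [NormedAddCommGroup E] [NormedSpace ℝ E] (u : Heis → E) (p : Heis) : E :=
  XD (XD u) p + YD (YD u) p

/-- The CR Schwarzian derivative S_CR(f) = (1/2)·J_F·Z²(J_F⁻¹). -/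
def SCR (f1 f2 : Heis → ℝ) (p : Heis) : ℂ :=
  (1 / 2 : ℂ) * (JF f1 f2 p : ℂ) * ZD (ZD (fun q => (((JF f1 f2 q)⁻¹ : ℝ) : ℂ))) p

/-- The classical type Schwarzian S_CL(f) = Z³F/ZF − (3/2)(Z²F/ZF)². -/
def SCL (f1 f2 : Heis → ℝ) (p : Heis) : ℂ :=
  ZD (ZD (ZD (CF f1 f2))) p / ZD (CF f1 f2) p
    - (3 / 2 : ℂ) * (ZD (ZD (CF f1 f2)) p / ZD (CF f1 f2) p) ^ 2

/-- The Preschwarzian Pf = Z(ln J_F). -/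
def PS (f1 f2 : Heis → ℝ) (p : Heis) : ℂ := ZD (Cplx (fun q => Real.log (JF f1 f2 q))) p

/-- The map (f₁,f₂,f₃) packaged as a map Heis → Heis. -/
def Fmap (f1 f2 f3 : Heis → ℝ) (p : Heis) : Heis := (f1 p, f2 p, f3 p)

/-!
Write `a = ZG` and `b = Z̄Ḡ`, so that `J_G = ab` because `Z̄G = 0`. The contact equations of `g`
give `Tg₃ = J_G + i(Ḡ TG - G TḠ)`; applying `Z` and using `[Z, T] = 0` yields `Z(ab) = -a Zb`, and
`Zb = [Z, Z̄]Ḡ = -2i TḠ` yields `Z²b = 0`. Hence `ab²` is a constant of `Z`, and for every `w`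
`Z²((w ∘ g)/J_G) = Z²((w ∘ g)b)/(ab²) = (Z²w ∘ g) a²/J_G`. The cocycle condition is the case
`w = 1/J_F`, since `J_{f ∘ g} = (J_F ∘ g) J_G`.
-/

section Derivation

variable {E : Type*} [NormedAddCommGroup E] [NormedSpace ℝ E] {Ω : Set E}

/-- `D` acts on complex-valued functions on `Ω` as a complex vector field with smooth coefficients:
it is local, `ℂ`-linear, satisfies the Leibniz rule and loses one degree of differentiability. Only
the values on `Ω` are constrained. -/
structure IsDerivationOn (D : (E → ℂ) → E → ℂ) (Ω : Set E) : Prop where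
  contDiffOn : ∀ {n : ℕ∞} {u}, ContDiffOn ℝ (n + 1) u Ω → ContDiffOn ℝ n (D u) Ω
  map_congr : ∀ {u v}, Set.EqOn u v Ω → Set.EqOn (D u) (D v) Ω
  map_smul : ∀ (c : ℂ) {u}, DifferentiableOn ℝ u Ω → Set.EqOn (D (c • u)) (c • D u) Ω
  map_add : ∀ {u v}, DifferentiableOn ℝ u Ω → DifferentiableOn ℝ v Ω →
    Set.EqOn (D (u + v)) (D u + D v) Ω
  leibniz : ∀ {u v}, DifferentiableOn ℝ u Ω → DifferentiableOn ℝ v Ω →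
    Set.EqOn (D (u * v)) (D u * v + u * D v) Ω

theorem isDerivationOn_fderiv (hΩ : IsOpen Ω) {V : E → E} (hV : ContDiff ℝ (⊤ : ℕ∞) V) :
    IsDerivationOn (fun u p => fderiv ℝ u p (V p)) Ω where
  contDiffOn {n} u hu :=
    (hu.fderiv_of_isOpen hΩ le_rfl).clm_apply (hV.of_le (mod_cast le_top)).contDiffOn
  map_congr h p hp := by
    simp only [(h.eventuallyEq_of_mem (hΩ.mem_nhds hp)).fderiv_eq]
  map_smul c u hu p hp := by
    simp [fderiv_const_smul (hu.differentiableAt (hΩ.mem_nhds hp))]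
  map_add hu hv p hp := by
    simp [fderiv_add (hu.differentiableAt (hΩ.mem_nhds hp)) (hv.differentiableAt (hΩ.mem_nhds hp))]
  leibniz hu hv p hp := by
    simp only [fderiv_mul (hu.differentiableAt (hΩ.mem_nhds hp))
      (hv.differentiableAt (hΩ.mem_nhds hp)), add_apply,
      smul_apply, smul_eq_mul, Pi.add_apply, Pi.mul_apply]
    ring

namespace IsDerivationOn

variable {D D' : (E → ℂ) → E → ℂ}

theorem smul_add_smul (hD : IsDerivationOn D Ω) (hD' : IsDerivationOn D' Ω) (c c' : ℂ) :
    IsDerivationOn (fun u => c • D u + c' • D' u) Ω where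
  contDiffOn hu := ((hD.contDiffOn hu).const_smul c).add ((hD'.contDiffOn hu).const_smul c')
  map_congr h p hp := by
    simp only [Pi.add_apply, Pi.smul_apply, hD.map_congr h hp, hD'.map_congr h hp]
  map_smul r u hu p hp := by
    simp only [Pi.add_apply, Pi.smul_apply, hD.map_smul r hu hp, hD'.map_smul r hu hp, smul_eq_mul]
    ring
  map_add hu hv p hp := by
    simp only [Pi.add_apply, Pi.smul_apply, hD.map_add hu hv hp, hD'.map_add hu hv hp, smul_eq_mul]
    ring
  leibniz hu hv p hp := by
    simp only [Pi.add_apply, Pi.mul_apply, Pi.smul_apply, hD.leibniz hu hv hp, hD'.leibniz hu hv hp,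
      smul_eq_mul]
    ring

variable {u v s t : E → ℂ}

theorem map_smul_add_smul (hD : IsDerivationOn D Ω) (c c' : ℂ) (hu : DifferentiableOn ℝ u Ω)
    (hv : DifferentiableOn ℝ v Ω) :
    Set.EqOn (D (c • u + c' • v)) (c • D u + c' • D v) Ω := fun p hp => by
  rw [hD.map_add (hu.const_smul c) (hv.const_smul c') hp, Pi.add_apply, hD.map_smul c hu hp,
    hD.map_smul c' hv hp, Pi.add_apply]

theorem map_sub (hD : IsDerivationOn D Ω) (hu : DifferentiableOn ℝ u Ω)
    (hv : DifferentiableOn ℝ v Ω) : Set.EqOn (D (u - v)) (D u - D v) Ω := by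
  simpa [sub_eq_add_neg] using hD.map_smul_add_smul 1 (-1) hu hv

theorem map_smul_mul_sub_mul (hD : IsDerivationOn D Ω) (c : ℂ) (hu : DifferentiableOn ℝ u Ω)
    (hv : DifferentiableOn ℝ v Ω) (hs : DifferentiableOn ℝ s Ω) (ht : DifferentiableOn ℝ t Ω) :
    Set.EqOn (D (c • (u * v - s * t))) (c • (D u * v + u * D v - (D s * t + s * D t))) Ω :=
  fun p hp => by
    rw [hD.map_smul c ((hu.mul hv).sub (hs.mul ht)) hp, Pi.smul_apply,
      hD.map_sub (hu.mul hv) (hs.mul ht) hp, Pi.sub_apply, hD.leibniz hu hv hp, hD.leibniz hs ht hp]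
    rfl

theorem differentiableOn (hD : IsDerivationOn D Ω) (hu : ContDiffOn ℝ 2 u Ω) :
    DifferentiableOn ℝ (D u) Ω :=
  (hD.contDiffOn (n := 1) hu).differentiableOn one_ne_zero

/-- Cartan's formula for the exterior derivative of the one-form `c • (v du - u dv)`, evaluated on
`D` and `D'`. -/
theorem map_smul_sub_map_smul (hD : IsDerivationOn D Ω) (hD' : IsDerivationOn D' Ω) (c : ℂ)
    (hu : ContDiffOn ℝ 2 u Ω) (hv : ContDiffOn ℝ 2 v Ω) :
    Set.EqOn (D (c • (v * D' u - u * D' v)) - D' (c • (v * D u - u * D v)))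
      (c • (v * (D (D' u) - D' (D u)) - u * (D (D' v) - D' (D v))
        + (2 : ℂ) • (D v * D' u - D u * D' v))) Ω := fun p hp => by
  have hu1 := hu.differentiableOn two_ne_zero
  have hv1 := hv.differentiableOn two_ne_zero
  rw [Pi.sub_apply, hD.map_smul_mul_sub_mul c hv1 (hD'.differentiableOn hu) hu1
      (hD'.differentiableOn hv) hp, hD'.map_smul_mul_sub_mul c hv1 (hD.differentiableOn hu) hu1
      (hD.differentiableOn hv) hp]
  simp only [Pi.smul_apply, Pi.add_apply, Pi.sub_apply, Pi.mul_apply, smul_eq_mul]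
  ring

theorem map_eqOn_zero (hD : IsDerivationOn D Ω) (hu : Set.EqOn u 0 Ω) : Set.EqOn (D u) 0 Ω :=
  fun p hp => by
    rw [hD.map_congr (v := (0 : ℂ) • (0 : E → ℂ)) (by simpa using hu) hp,
      hD.map_smul 0 differentiable_zero.differentiableOn hp, zero_smul]

theorem map_mul_of_map_eqOn_zero (hD : IsDerivationOn D Ω) (hu : DifferentiableOn ℝ u Ω)
    (hv : DifferentiableOn ℝ v Ω) (hDv : Set.EqOn (D v) 0 Ω) :
    Set.EqOn (D (u * v)) (D u * v) Ω := fun p hp => by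
  simp [hD.leibniz hu hv hp, hDv hp]

theorem map_one (hD : IsDerivationOn D Ω) : Set.EqOn (D 1) 0 Ω := fun p hp => by
  have h := hD.leibniz (differentiableOn_const (1 : ℂ)) (differentiableOn_const (1 : ℂ)) hp
  simpa [← Pi.one_def] using h

theorem map_inv_eqOn_zero (hD : IsDerivationOn D Ω) (hu : DifferentiableOn ℝ u Ω)
    (hu0 : ∀ p ∈ Ω, u p ≠ 0) (hDu : Set.EqOn (D u) 0 Ω) : Set.EqOn (D u⁻¹) 0 Ω :=
  fun p hp => by
    have h := hD.map_mul_of_map_eqOn_zero (hu.inv hu0) hu hDu hp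
    have huu : Set.EqOn (u⁻¹ * u) 1 Ω := fun q hq => by simp [hu0 q hq]
    rw [hD.map_congr huu hp, hD.map_one hp] at h
    simpa [hu0 p hp] using h.symm

theorem map_map_mul_of_map_eqOn_zero (hD : IsDerivationOn D Ω) (hu : DifferentiableOn ℝ u Ω)
    (hDu : DifferentiableOn ℝ (D u) Ω) (hv : DifferentiableOn ℝ v Ω) (hDv : Set.EqOn (D v) 0 Ω) :
    Set.EqOn (D (D (u * v))) (D (D u) * v) Ω :=
  (hD.map_congr (hD.map_mul_of_map_eqOn_zero hu hv hDv)).trans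
    (hD.map_mul_of_map_eqOn_zero hDu hv hDv)

variable {a b h k l : E → ℂ}

theorem map_mul_sq_eqOn_zero (hD : IsDerivationOn D Ω) (ha : DifferentiableOn ℝ a Ω)
    (hb : DifferentiableOn ℝ b Ω) (hDab : Set.EqOn (D (a * b)) (-(a * D b)) Ω) :
    Set.EqOn (D (a * b * b)) 0 Ω := fun p hp => by
  rw [hD.leibniz (ha.mul hb) hb hp, Pi.add_apply, Pi.mul_apply, hDab hp]
  simp only [Pi.neg_apply, Pi.mul_apply, Pi.zero_apply]
  ring

theorem map_mul_of_map_eq (hD : IsDerivationOn D Ω) (hb : DifferentiableOn ℝ b Ω)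
    (hh : DifferentiableOn ℝ h Ω) (hDh : Set.EqOn (D h) (k * a) Ω) :
    Set.EqOn (D (h * b)) (k * (a * b) + h * D b) Ω := fun p hp => by
  simp [hD.leibniz hh hb hp, hDh hp, mul_assoc]

theorem map_map_mul_of_map_eq (hD : IsDerivationOn D Ω) (ha : DifferentiableOn ℝ a Ω)
    (hb : DifferentiableOn ℝ b Ω) (hDb : DifferentiableOn ℝ (D b) Ω)
    (hh : DifferentiableOn ℝ h Ω) (hk : DifferentiableOn ℝ k Ω)
    (hDab : Set.EqOn (D (a * b)) (-(a * D b)) Ω) (hDDb : Set.EqOn (D (D b)) 0 Ω)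
    (hDh : Set.EqOn (D h) (k * a) Ω) (hDk : Set.EqOn (D k) (l * a) Ω) :
    Set.EqOn (D (D (h * b))) (l * a ^ 2 * b) Ω := fun p hp => by
  rw [hD.map_congr (hD.map_mul_of_map_eq hb hh hDh) hp,
    hD.map_add (hk.mul (ha.mul hb)) (hh.mul hDb) hp, Pi.add_apply, hD.leibniz hk (ha.mul hb) hp,
    hD.leibniz hh hDb hp]
  simp only [Pi.add_apply, Pi.mul_apply, Pi.neg_apply, Pi.pow_apply, Pi.zero_apply, hDk hp,
    hDh hp, hDab hp, hDDb hp]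
  ring

/-- By `hDab`, `a * b ^ 2` is a constant of `D`; since `(a * b)⁻¹ = b * (a * b ^ 2)⁻¹`, only
`h * b` has to be differentiated. -/
theorem map_map_mul_inv (hD : IsDerivationOn D Ω) (ha : DifferentiableOn ℝ a Ω)
    (hb : DifferentiableOn ℝ b Ω) (hDb : DifferentiableOn ℝ (D b) Ω)
    (hh : DifferentiableOn ℝ h Ω) (hk : DifferentiableOn ℝ k Ω)
    (ha0 : ∀ p ∈ Ω, a p ≠ 0) (hb0 : ∀ p ∈ Ω, b p ≠ 0)
    (hDab : Set.EqOn (D (a * b)) (-(a * D b)) Ω) (hDDb : Set.EqOn (D (D b)) 0 Ω)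
    (hDh : Set.EqOn (D h) (k * a) Ω) (hDk : Set.EqOn (D k) (l * a) Ω) :
    Set.EqOn (D (D (h * (a * b)⁻¹))) (l * a ^ 2 * (a * b)⁻¹) Ω := by
  have hab2 : DifferentiableOn ℝ (a * b * b) Ω := (ha.mul hb).mul hb
  have hab2_ne : ∀ p ∈ Ω, (a * b * b) p ≠ 0 := fun p hp =>
    mul_ne_zero (mul_ne_zero (ha0 p hp) (hb0 p hp)) (hb0 p hp)
  have hDinv := hD.map_inv_eqOn_zero hab2 hab2_ne (hD.map_mul_sq_eqOn_zero ha hb hDab)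
  have hDhb : DifferentiableOn ℝ (D (h * b)) Ω :=
    ((hk.mul (ha.mul hb)).add (hh.mul hDb)).congr (hD.map_mul_of_map_eq hb hh hDh)
  have hfactor (w : E → ℂ) : Set.EqOn (w * (a * b)⁻¹) (w * b * (a * b * b)⁻¹) Ω := fun p hp => by
    have := ha0 p hp
    have := hb0 p hp
    simp only [Pi.mul_apply, Pi.inv_apply]
    field_simp
  intro p hp
  rw [hD.map_congr (hD.map_congr (hfactor h)) hp,
    hD.map_map_mul_of_map_eqOn_zero (hh.mul hb) hDhb (hab2.inv hab2_ne) hDinv hp, Pi.mul_apply,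
    hD.map_map_mul_of_map_eq ha hb hDb hh hk hDab hDDb hDh hDk hp, ← Pi.mul_apply,
    ← hfactor (l * a ^ 2) hp]

end IsDerivationOn

end Derivation

section HorizontalFields

/-- The vector field `X` as a map, so that `VectorField.lieBracket` applies to it. -/
def heisX (p : Heis) : Heis := (1, 0, 2 * p.2.1)

/-- The vector field `Y` as a map, so that `VectorField.lieBracket` applies to it. -/
def heisY (p : Heis) : Heis := (0, 1, -(2 * p.1))

theorem contDiff_heisX : ContDiff ℝ (⊤ : ℕ∞) heisX := by
  unfold heisX
  fun_prop

theorem contDiff_heisY : ContDiff ℝ (⊤ : ℕ∞) heisY := by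
  unfold heisY
  fun_prop

theorem fderiv_heisX (p v : Heis) : fderiv ℝ heisX p v = (0, 0, 2 * v.2.1) := by
  have h : HasFDerivAt (fun q : Heis => 2 * q.2.1) _ p :=
    (ContinuousLinearMap.fst ℝ ℝ ℝ ∘L ContinuousLinearMap.snd ℝ ℝ (ℝ × ℝ)).hasFDerivAt.const_mul 2
  have hX : HasFDerivAt heisX _ p :=
    (hasFDerivAt_const (1 : ℝ) p).prodMk ((hasFDerivAt_const (0 : ℝ) p).prodMk h)
  simp [hX.fderiv]

theorem fderiv_heisY (p v : Heis) : fderiv ℝ heisY p v = (0, 0, -(2 * v.1)) := by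
  have h : HasFDerivAt (fun q : Heis => -(2 * q.1)) _ p :=
    ((ContinuousLinearMap.fst ℝ ℝ (ℝ × ℝ)).hasFDerivAt.const_mul 2).neg
  have hY : HasFDerivAt heisY _ p :=
    (hasFDerivAt_const (0 : ℝ) p).prodMk ((hasFDerivAt_const (1 : ℝ) p).prodMk h)
  simp [hY.fderiv]

theorem lieBracket_heisX_heisY (p : Heis) :
    VectorField.lieBracket ℝ heisX heisY p = (-4 : ℝ) • ((0, 0, 1) : Heis) := by
  simp only [VectorField.lieBracket, fderiv_heisX, fderiv_heisY]
  ext <;> norm_num [heisX, heisY]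

variable {E : Type*} [NormedAddCommGroup E] [NormedSpace ℝ E] {u : Heis → E} {p : Heis}

theorem XD_YD_sub_YD_XD (hu : ContDiffAt ℝ 2 u p) :
    XD (YD u) p - YD (XD u) p = (-4 : ℝ) • TD u p := by
  have h := VectorField.fderiv_apply_lieBracket hu (by simp)
    (contDiff_heisY.differentiable (by simp) p) (contDiff_heisX.differentiable (by simp) p)
  rw [lieBracket_heisX_heisY, map_smul] at h
  exact h.symm

theorem XD_TD (hu : ContDiffAt ℝ 2 u p) : XD (TD u) p = TD (XD u) p := by
  have h := VectorField.fderiv_apply_lieBracket hu (by simp)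
    (differentiableAt_const ((0, 0, 1) : Heis)) (contDiff_heisX.differentiable (by simp) p)
  simp only [VectorField.lieBracket, fderiv_heisX, fderiv_fun_const, Pi.zero_apply,
    zero_apply, mul_zero, sub_self, Prod.mk_zero_zero, map_zero] at h
  exact sub_eq_zero.mp h.symm

theorem YD_TD (hu : ContDiffAt ℝ 2 u p) : YD (TD u) p = TD (YD u) p := by
  have h := VectorField.fderiv_apply_lieBracket hu (by simp)
    (differentiableAt_const ((0, 0, 1) : Heis)) (contDiff_heisY.differentiable (by simp) p)
  simp only [VectorField.lieBracket, fderiv_heisY, fderiv_fun_const, Pi.zero_apply,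
    zero_apply, mul_zero, neg_zero, sub_self, Prod.mk_zero_zero, map_zero] at h
  exact sub_eq_zero.mp h.symm

end HorizontalFields

section ComplexFields

variable {Ω : Set Heis} {u : Heis → ℂ} {p : Heis}

theorem isDerivationOn_XD (hΩ : IsOpen Ω) : IsDerivationOn XD Ω :=
  isDerivationOn_fderiv hΩ contDiff_heisX

theorem isDerivationOn_YD (hΩ : IsOpen Ω) : IsDerivationOn YD Ω :=
  isDerivationOn_fderiv hΩ contDiff_heisY

theorem isDerivationOn_TD (hΩ : IsOpen Ω) : IsDerivationOn TD Ω :=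
  isDerivationOn_fderiv hΩ contDiff_const

theorem ZD_eq (u : Heis → ℂ) : ZD u = (1 / 2 : ℂ) • XD u + (-I / 2) • YD u := by
  funext p
  simp only [ZD, Pi.add_apply, Pi.smul_apply, smul_eq_mul]
  ring

theorem ZbD_eq (u : Heis → ℂ) : ZbD u = (1 / 2 : ℂ) • XD u + (I / 2) • YD u := by
  funext p
  simp only [ZbD, Pi.add_apply, Pi.smul_apply, smul_eq_mul]
  ring

theorem isDerivationOn_ZD (hΩ : IsOpen Ω) : IsDerivationOn ZD Ω :=
  (funext ZD_eq : ZD = _) ▸ (isDerivationOn_XD hΩ).smul_add_smul (isDerivationOn_YD hΩ) _ _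

theorem isDerivationOn_ZbD (hΩ : IsOpen Ω) : IsDerivationOn ZbD Ω :=
  (funext ZbD_eq : ZbD = _) ▸ (isDerivationOn_XD hΩ).smul_add_smul (isDerivationOn_YD hΩ) _ _

theorem ZD_TD (hΩ : IsOpen Ω) (hu : ContDiffOn ℝ 2 u Ω) :
    Set.EqOn (ZD (TD u)) (TD (ZD u)) Ω := fun p hp => by
  have hXu := (isDerivationOn_XD hΩ).differentiableOn hu
  have hYu := (isDerivationOn_YD hΩ).differentiableOn hu
  have hup := hu.contDiffAt (hΩ.mem_nhds hp)
  rw [ZD_eq u, (isDerivationOn_TD hΩ).map_smul_add_smul _ _ hXu hYu hp, ZD_eq]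
  simp only [Pi.add_apply, Pi.smul_apply, XD_TD hup, YD_TD hup]

theorem ZD_ZbD_sub_ZbD_ZD (hΩ : IsOpen Ω) (hu : ContDiffOn ℝ 2 u Ω) :
    Set.EqOn (ZD (ZbD u) - ZbD (ZD u)) ((-2 * I) • TD u) Ω := fun p hp => by
  have hX := isDerivationOn_XD hΩ
  have hY := isDerivationOn_YD hΩ
  have hXu := hX.differentiableOn hu
  have hYu := hY.differentiableOn hu
  have hXY := XD_YD_sub_YD_XD (hu.contDiffAt (hΩ.mem_nhds hp))
  rw [real_smul] at hXY
  push_cast at hXY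
  rw [ZD_eq u, ZbD_eq u, ZD_eq, ZbD_eq]
  simp only [Pi.sub_apply, Pi.add_apply, Pi.smul_apply, smul_eq_mul,
    hX.map_smul_add_smul _ _ hXu hYu hp, hY.map_smul_add_smul _ _ hXu hYu hp]
  linear_combination (I / 2) * hXY

end ComplexFields

section Complexification

variable {Ω : Set Heis} {f1 f2 : Heis → ℝ} {u : Heis → ℂ} {p : Heis}

theorem fderiv_Cplx {f : Heis → ℝ} (hf : DifferentiableAt ℝ f p) (v : Heis) :
    fderiv ℝ (Cplx f) p v = (fderiv ℝ f p v : ℂ) := by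
  have h : HasFDerivAt (Cplx f) _ p := ofRealCLM.hasFDerivAt.comp p hf.hasFDerivAt
  simp [h.fderiv]

theorem contDiffOn_Cplx {n : WithTop ℕ∞} {f : Heis → ℝ} (hf : ContDiffOn ℝ n f Ω) :
    ContDiffOn ℝ n (Cplx f) Ω :=
  ofRealCLM.contDiff.comp_contDiffOn hf

theorem fderiv_CF (hf1 : DifferentiableAt ℝ f1 p) (hf2 : DifferentiableAt ℝ f2 p) (v : Heis) :
    fderiv ℝ (CF f1 f2) p v = fderiv ℝ f1 p v + fderiv ℝ f2 p v * I := by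
  have h : HasFDerivAt (CF f1 f2) _ p :=
    (ofRealCLM.hasFDerivAt.comp p hf1.hasFDerivAt).add
      ((ofRealCLM.hasFDerivAt.comp p hf2.hasFDerivAt).mul_const I)
  simp [h.fderiv, mul_comm]

theorem contDiffOn_CF {n : WithTop ℕ∞} (hf1 : ContDiffOn ℝ n f1 Ω) (hf2 : ContDiffOn ℝ n f2 Ω) :
    ContDiffOn ℝ n (CF f1 f2) Ω :=
  (ofRealCLM.contDiff.comp_contDiffOn hf1).add
    ((ofRealCLM.contDiff.comp_contDiffOn hf2).mul contDiffOn_const)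

theorem contDiffOn_star {n : WithTop ℕ∞} (hu : ContDiffOn ℝ n u Ω) : ContDiffOn ℝ n (star u) Ω :=
  conjCLE.contDiff.comp_contDiffOn hu

theorem fderiv_star_apply (u : Heis → ℂ) (p v : Heis) :
    fderiv ℝ (star u) p v = star (fderiv ℝ u p v) := by
  have h : fderiv ℝ (star u) p = _ := fderiv_star (𝕜 := ℝ) (f := u) (x := p)
  rw [h]
  rfl

theorem XD_CF (hf1 : DifferentiableAt ℝ f1 p) (hf2 : DifferentiableAt ℝ f2 p) :
    XD (CF f1 f2) p = XD f1 p + XD f2 p * I :=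
  fderiv_CF hf1 hf2 _

theorem YD_CF (hf1 : DifferentiableAt ℝ f1 p) (hf2 : DifferentiableAt ℝ f2 p) :
    YD (CF f1 f2) p = YD f1 p + YD f2 p * I :=
  fderiv_CF hf1 hf2 _

theorem XD_star (u : Heis → ℂ) (p : Heis) : XD (star u) p = star (XD u p) :=
  fderiv_star_apply u p _

theorem YD_star (u : Heis → ℂ) (p : Heis) : YD (star u) p = star (YD u p) :=
  fderiv_star_apply u p _

theorem ZD_star (u : Heis → ℂ) : ZD (star u) = star (ZbD u) := by
  funext p
  simp [ZD, ZbD, XD_star, YD_star, sub_eq_add_neg]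

theorem ZbD_star (u : Heis → ℂ) : ZbD (star u) = star (ZD u) := by
  rw [eq_star_iff_eq_star, ← ZD_star, star_star]

theorem ofReal_JF (hf1 : DifferentiableAt ℝ f1 p) (hf2 : DifferentiableAt ℝ f2 p) :
    (JF f1 f2 p : ℂ) = ZD (CF f1 f2) p * ZbD (star (CF f1 f2)) p
      - ZD (star (CF f1 f2)) p * ZbD (CF f1 f2) p := by
  simp only [JF, ZD, ZbD, XD_star, YD_star, XD_CF hf1 hf2, YD_CF hf1 hf2, star_def, map_add,
    map_mul, conj_ofReal, conj_I]
  push_cast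
  ring_nf
  simp only [I_sq]
  ring

theorem JF_eq_normSq_sub_normSq (hf1 : DifferentiableAt ℝ f1 p) (hf2 : DifferentiableAt ℝ f2 p) :
    JF f1 f2 p = normSq (ZD (CF f1 f2) p) - normSq (ZbD (CF f1 f2) p) := by
  have h := ofReal_JF hf1 hf2
  rw [ZD_star, ZbD_star, Pi.star_apply, Pi.star_apply, star_def, mul_conj,
    ← normSq_eq_conj_mul_self] at h
  exact_mod_cast h

theorem contDiffOn_Cplx_JF {n : ℕ∞} (hΩ : IsOpen Ω) (hf1 : ContDiffOn ℝ (n + 1) f1 Ω)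
    (hf2 : ContDiffOn ℝ (n + 1) f2 Ω) : ContDiffOn ℝ n (Cplx (JF f1 f2)) Ω := by
  have hZ := isDerivationOn_ZD hΩ
  have hZb := isDerivationOn_ZbD hΩ
  have hF := contDiffOn_CF hf1 hf2
  have hF' := contDiffOn_star hF
  refine (((hZ.contDiffOn hF).mul (hZb.contDiffOn hF')).sub
    ((hZ.contDiffOn hF').mul (hZb.contDiffOn hF))).congr fun p hp => ?_
  exact ofReal_JF ((hf1.contDiffAt (hΩ.mem_nhds hp)).differentiableAt (by simp))
    ((hf2.contDiffAt (hΩ.mem_nhds hp)).differentiableAt (by simp))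

theorem ZD_CF_ne_zero_of_JF_pos (hf1 : DifferentiableAt ℝ f1 p) (hf2 : DifferentiableAt ℝ f2 p)
    (hJ : 0 < JF f1 f2 p) : ZD (CF f1 f2) p ≠ 0 := fun h => by
  rw [JF_eq_normSq_sub_normSq hf1 hf2, h, map_zero] at hJ
  linarith [normSq_nonneg (ZbD (CF f1 f2) p)]

/-- In complex form, the conformality equations say that one of `ZG`, `Z̄G` vanishes; the sign of
the Jacobian `|ZG|² - |Z̄G|²` decides which one. -/
theorem ZbD_CF_eq_zero (hf1 : DifferentiableAt ℝ f1 p) (hf2 : DifferentiableAt ℝ f2 p)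
    (hJ : 0 < JF f1 f2 p) (hnorm : XD f1 p ^ 2 + XD f2 p ^ 2 = YD f1 p ^ 2 + YD f2 p ^ 2)
    (horth : XD f1 p * YD f1 p + XD f2 p * YD f2 p = 0) : ZbD (CF f1 f2) p = 0 := by
  have hmul : ZD (CF f1 f2) p * ZD (star (CF f1 f2)) p = 0 := by
    have hnormC : (XD f1 p ^ 2 + XD f2 p ^ 2 : ℂ) = YD f1 p ^ 2 + YD f2 p ^ 2 := mod_cast hnorm
    have horthC : (XD f1 p * YD f1 p + XD f2 p * YD f2 p : ℂ) = 0 := mod_cast horth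
    simp only [ZD, XD_star, YD_star, XD_CF hf1 hf2, YD_CF hf1 hf2, star_def, map_add, map_mul,
      conj_ofReal, conj_I]
    ring_nf
    simp only [I_sq, I_pow_three, I_pow_four]
    linear_combination hnormC / 4 - I / 2 * horthC
  simpa [ZD_star, ZD_CF_ne_zero_of_JF_pos hf1 hf2 hJ] using hmul

end Complexification

section ContactMaps

variable {Ω : Set Heis} {f1 f2 g1 g2 g3 : Heis → ℝ} {p : Heis}

theorem fderiv_Cplx_of_contact {v : Heis} (hg : DifferentiableAt ℝ (Fmap g1 g2 g3) p)
    (hv : fderiv ℝ g3 p v - 2 * g2 p * fderiv ℝ g1 p v + 2 * g1 p * fderiv ℝ g2 p v = 0) :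
    fderiv ℝ (Cplx g3) p v = I * (star (CF g1 g2) p * fderiv ℝ (CF g1 g2) p v
      - CF g1 g2 p * fderiv ℝ (star (CF g1 g2)) p v) := by
  have hvC : (fderiv ℝ g3 p v - 2 * g2 p * fderiv ℝ g1 p v + 2 * g1 p * fderiv ℝ g2 p v : ℂ) = 0 :=
    mod_cast hv
  have hg1 : DifferentiableAt ℝ g1 p := hg.fst
  have hg2 : DifferentiableAt ℝ g2 p := hg.snd.fst
  have hg3 : DifferentiableAt ℝ g3 p := hg.snd.snd
  rw [fderiv_star_apply, fderiv_CF hg1 hg2, fderiv_Cplx hg3]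
  simp only [Pi.star_apply, CF, star_def, map_add, map_mul, conj_ofReal, conj_I]
  ring_nf
  simp only [I_sq]
  linear_combination hvC

namespace ContactOn

theorem ZD_Cplx (hΩ : IsOpen Ω) (hg : ContactOn g1 g2 g3 Ω)
    (hd : DifferentiableOn ℝ (Fmap g1 g2 g3) Ω) :
    Set.EqOn (ZD (Cplx g3))
      (I • (star (CF g1 g2) * ZD (CF g1 g2) - CF g1 g2 * ZD (star (CF g1 g2)))) Ω := fun p hp => by
  have hX := fderiv_Cplx_of_contact (hd.differentiableAt (hΩ.mem_nhds hp)) (hg p hp).1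
  have hY := fderiv_Cplx_of_contact (hd.differentiableAt (hΩ.mem_nhds hp)) (hg p hp).2
  simp only [ZD, XD, YD, Pi.smul_apply, Pi.sub_apply, Pi.mul_apply, smul_eq_mul]
  linear_combination hX / 2 - I / 2 * hY

theorem ZbD_Cplx (hΩ : IsOpen Ω) (hg : ContactOn g1 g2 g3 Ω)
    (hd : DifferentiableOn ℝ (Fmap g1 g2 g3) Ω) :
    Set.EqOn (ZbD (Cplx g3))
      (I • (star (CF g1 g2) * ZbD (CF g1 g2) - CF g1 g2 * ZbD (star (CF g1 g2)))) Ω :=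
  fun p hp => by
    have hX := fderiv_Cplx_of_contact (hd.differentiableAt (hΩ.mem_nhds hp)) (hg p hp).1
    have hY := fderiv_Cplx_of_contact (hd.differentiableAt (hΩ.mem_nhds hp)) (hg p hp).2
    simp only [ZbD, XD, YD, Pi.smul_apply, Pi.sub_apply, Pi.mul_apply, smul_eq_mul]
    linear_combination hX / 2 + I / 2 * hY

end ContactOn

variable {E : Type*} [NormedAddCommGroup E] [NormedSpace ℝ E]

/-- The contact equation along `v` says that the image of `v` under `dg` is horizontal. -/
theorem fderiv_comp_Fmap_of_contact {u : Heis → E} {v : Heis}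
    (hg : DifferentiableAt ℝ (Fmap g1 g2 g3) p) (hu : DifferentiableAt ℝ u (Fmap g1 g2 g3 p))
    (hv : fderiv ℝ g3 p v - 2 * g2 p * fderiv ℝ g1 p v + 2 * g1 p * fderiv ℝ g2 p v = 0) :
    fderiv ℝ (u ∘ Fmap g1 g2 g3) p v
      = fderiv ℝ g1 p v • XD u (Fmap g1 g2 g3 p) + fderiv ℝ g2 p v • YD u (Fmap g1 g2 g3 p) := by
  have hFmap : HasFDerivAt (Fmap g1 g2 g3)
      ((fderiv ℝ g1 p).prod ((fderiv ℝ g2 p).prod (fderiv ℝ g3 p))) p :=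
    hg.fst.hasFDerivAt.prodMk (hg.snd.fst.hasFDerivAt.prodMk hg.snd.snd.hasFDerivAt)
  rw [(hu.hasFDerivAt.comp p hFmap).fderiv, XD, YD, ← map_smul, ← map_smul, ← map_add,
    ContinuousLinearMap.comp_apply]
  congr 1
  ext
  · simp
  · simp
  · simp only [Fmap, ContinuousLinearMap.prod_apply, Prod.smul_mk, Prod.mk_add_mk, smul_eq_mul]
    linear_combination hv

namespace ContactOn

theorem XD_comp (hg : ContactOn g1 g2 g3 Ω) (hd : DifferentiableAt ℝ (Fmap g1 g2 g3) p)
    (hp : p ∈ Ω) {u : Heis → E} (hu : DifferentiableAt ℝ u (Fmap g1 g2 g3 p)) :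
    XD (u ∘ Fmap g1 g2 g3) p
      = XD g1 p • XD u (Fmap g1 g2 g3 p) + XD g2 p • YD u (Fmap g1 g2 g3 p) :=
  fderiv_comp_Fmap_of_contact hd hu (hg p hp).1

theorem YD_comp (hg : ContactOn g1 g2 g3 Ω) (hd : DifferentiableAt ℝ (Fmap g1 g2 g3) p)
    (hp : p ∈ Ω) {u : Heis → E} (hu : DifferentiableAt ℝ u (Fmap g1 g2 g3 p)) :
    YD (u ∘ Fmap g1 g2 g3) p
      = YD g1 p • XD u (Fmap g1 g2 g3 p) + YD g2 p • YD u (Fmap g1 g2 g3 p) :=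
  fderiv_comp_Fmap_of_contact hd hu (hg p hp).2

theorem JF_comp (hg : ContactOn g1 g2 g3 Ω) (hd : DifferentiableAt ℝ (Fmap g1 g2 g3) p)
    (hp : p ∈ Ω) (hf1 : DifferentiableAt ℝ f1 (Fmap g1 g2 g3 p))
    (hf2 : DifferentiableAt ℝ f2 (Fmap g1 g2 g3 p)) :
    JF (f1 ∘ Fmap g1 g2 g3) (f2 ∘ Fmap g1 g2 g3) p
      = JF f1 f2 (Fmap g1 g2 g3 p) * JF g1 g2 p := by
  rw [JF, hg.XD_comp hd hp hf1, hg.XD_comp hd hp hf2, hg.YD_comp hd hp hf1, hg.YD_comp hd hp hf2]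
  simp only [JF, smul_eq_mul]
  ring

theorem ZD_comp (hg : ContactOn g1 g2 g3 Ω) (hd : DifferentiableAt ℝ (Fmap g1 g2 g3) p)
    (hp : p ∈ Ω) {u : Heis → ℂ} (hu : DifferentiableAt ℝ u (Fmap g1 g2 g3 p)) :
    ZD (u ∘ Fmap g1 g2 g3) p = ZD u (Fmap g1 g2 g3 p) * ZD (CF g1 g2) p
      + ZbD u (Fmap g1 g2 g3 p) * ZD (star (CF g1 g2)) p := by
  have hg1 : DifferentiableAt ℝ g1 p := hd.fst
  have hg2 : DifferentiableAt ℝ g2 p := hd.snd.fst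
  simp only [ZD, ZbD, hg.XD_comp hd hp hu, hg.YD_comp hd hp hu, XD_star, YD_star, XD_CF hg1 hg2,
    YD_CF hg1 hg2, star_def, map_add, map_mul, conj_ofReal, conj_I, real_smul]
  ring_nf
  simp only [I_sq, I_pow_three]
  ring

/-- The identity `g^*θ = J_G θ` for the contact form `θ`, evaluated on `T`. -/
theorem TD_Cplx (hΩ : IsOpen Ω) (hg : ContactOn g1 g2 g3 Ω)
    (hs : ContDiffOn ℝ 2 (Fmap g1 g2 g3) Ω) :
    Set.EqOn (TD (Cplx g3)) (Cplx (JF g1 g2)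
      + I • (star (CF g1 g2) * TD (CF g1 g2) - CF g1 g2 * TD (star (CF g1 g2)))) Ω := by
  have hZ := isDerivationOn_ZD hΩ
  have hZb := isDerivationOn_ZbD hΩ
  have hd := hs.differentiableOn two_ne_zero
  have hg3 : ContDiffOn ℝ 2 g3 Ω := hs.snd.snd
  have hG : ContDiffOn ℝ 2 (CF g1 g2) Ω := contDiffOn_CF hs.fst hs.snd.fst
  have hG' := contDiffOn_star hG
  intro p hp
  have hdp := hd.differentiableAt (hΩ.mem_nhds hp)
  have hJ : (JF g1 g2 p : ℂ) = _ := ofReal_JF hdp.fst hdp.snd.fst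
  have hcomm := ZD_ZbD_sub_ZbD_ZD hΩ hG hp
  have hcomm' := ZD_ZbD_sub_ZbD_ZD hΩ hG' hp
  have hcartan := hZ.map_smul_sub_map_smul hZb I hG hG' hp
  rw [Pi.sub_apply, ← hZ.map_congr (hg.ZbD_Cplx hΩ hd) hp, ← hZb.map_congr (hg.ZD_Cplx hΩ hd) hp,
    ← Pi.sub_apply, ZD_ZbD_sub_ZbD_ZD hΩ (contDiffOn_Cplx hg3) hp] at hcartan
  simp only [Pi.add_apply, Pi.sub_apply, Pi.mul_apply, Pi.smul_apply,
    smul_eq_mul] at hcomm hcomm' hcartan ⊢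
  rw [hcomm, hcomm'] at hcartan
  refine mul_left_cancel₀ (by simp : -2 * I ≠ 0) ?_
  rw [Cplx, hJ]
  linear_combination hcartan

theorem ZD_JF (hΩ : IsOpen Ω) (hg : ContactOn g1 g2 g3 Ω)
    (hs : ContDiffOn ℝ 2 (Fmap g1 g2 g3) Ω) :
    Set.EqOn (ZD (Cplx (JF g1 g2))) ((2 * I) •
      (ZD (CF g1 g2) * TD (star (CF g1 g2)) - ZD (star (CF g1 g2)) * TD (CF g1 g2))) Ω := by
  have hZ := isDerivationOn_ZD hΩ
  have hT := isDerivationOn_TD hΩ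
  have hg3 : ContDiffOn ℝ 2 g3 Ω := hs.snd.snd
  have hG : ContDiffOn ℝ 2 (CF g1 g2) Ω := contDiffOn_CF hs.fst hs.snd.fst
  have hG' := contDiffOn_star hG
  have hdG := hG.differentiableOn two_ne_zero
  have hdG' := hG'.differentiableOn two_ne_zero
  have hJ : DifferentiableOn ℝ (Cplx (JF g1 g2)) Ω :=
    (contDiffOn_Cplx_JF (n := 1) hΩ hs.fst hs.snd.fst).differentiableOn one_ne_zero
  have hform := ((hdG'.mul (hT.differentiableOn hG)).sub
    (hdG.mul (hT.differentiableOn hG'))).const_smul I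
  intro p hp
  have hTg3 := hZ.map_congr (hg.TD_Cplx hΩ hs) hp
  rw [hZ.map_add hJ hform hp, ZD_TD hΩ (contDiffOn_Cplx hg3) hp,
    hT.map_congr (hg.ZD_Cplx hΩ (hs.differentiableOn two_ne_zero)) hp] at hTg3
  have hcartan := hZ.map_smul_sub_map_smul hT I hG hG' hp
  simp only [Pi.add_apply, Pi.sub_apply, Pi.mul_apply, Pi.smul_apply, smul_eq_mul, ZD_TD hΩ hG hp,
    ZD_TD hΩ hG' hp] at hTg3 hcartan ⊢
  linear_combination -hTg3 - hcartan

end ContactOn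

end ContactMaps

section CRMaps

variable {Ω Ω' : Set Heis} {f1 f2 g1 g2 g3 : Heis → ℝ}

/-- Contact maps `g` of class `C²` with `Z̄G = 0` and `ZG ≠ 0`: the complex form of conformality,
with only the regularity that the cocycle condition needs. -/
structure IsCRContactOn (g1 g2 g3 : Heis → ℝ) (Ω : Set Heis) : Prop where
  contDiffOn : ContDiffOn ℝ 2 (Fmap g1 g2 g3) Ω
  contact : ContactOn g1 g2 g3 Ω
  ZbD_eq_zero : Set.EqOn (ZbD (CF g1 g2)) 0 Ω
  ZD_ne_zero : ∀ p ∈ Ω, ZD (CF g1 g2) p ≠ 0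

theorem ConformalOn.isCRContactOn (hΩ : IsOpen Ω) (hg : ConformalOn g1 g2 g3 Ω) :
    IsCRContactOn g1 g2 g3 Ω := by
  obtain ⟨hg1, hg2, hg3, hcontact, hJ, hconf⟩ := hg
  have hdiff {f : Heis → ℝ} (hf : ContDiffOn ℝ (⊤ : ℕ∞) f Ω) {p : Heis} (hp : p ∈ Ω) :
      DifferentiableAt ℝ f p :=
    (hf.contDiffAt (hΩ.mem_nhds hp)).differentiableAt (by simp)
  exact
    { contDiffOn := contDiffOn_infty.mp (hg1.prodMk (hg2.prodMk hg3)) 2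
      contact := hcontact
      ZbD_eq_zero := fun p hp => ZbD_CF_eq_zero (hdiff hg1 hp) (hdiff hg2 hp) (hJ p hp)
        (hconf p hp).1 (hconf p hp).2
      ZD_ne_zero := fun p hp => ZD_CF_ne_zero_of_JF_pos (hdiff hg1 hp) (hdiff hg2 hp) (hJ p hp) }

namespace IsCRContactOn

theorem contDiffOn_CF (hg : IsCRContactOn g1 g2 g3 Ω) : ContDiffOn ℝ 2 (CF g1 g2) Ω :=
  _root_.contDiffOn_CF hg.contDiffOn.fst hg.contDiffOn.snd.fst

theorem contDiffOn_star_CF (hg : IsCRContactOn g1 g2 g3 Ω) : ContDiffOn ℝ 2 (star (CF g1 g2)) Ω :=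
  contDiffOn_star hg.contDiffOn_CF

theorem differentiableAt (hg : IsCRContactOn g1 g2 g3 Ω) (hΩ : IsOpen Ω) {p : Heis} (hp : p ∈ Ω) :
    DifferentiableAt ℝ (Fmap g1 g2 g3) p :=
  (hg.contDiffOn.contDiffAt (hΩ.mem_nhds hp)).differentiableAt two_ne_zero

theorem ZD_star_eq_zero (hg : IsCRContactOn g1 g2 g3 Ω) :
    Set.EqOn (ZD (star (CF g1 g2))) 0 Ω := fun p hp => by
  simp [ZD_star, hg.ZbD_eq_zero hp]

theorem ZbD_star_ne_zero (hg : IsCRContactOn g1 g2 g3 Ω) :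
    ∀ p ∈ Ω, ZbD (star (CF g1 g2)) p ≠ 0 := fun p hp => by
  simpa [ZbD_star] using hg.ZD_ne_zero p hp

theorem Cplx_JF (hΩ : IsOpen Ω) (hg : IsCRContactOn g1 g2 g3 Ω) :
    Set.EqOn (Cplx (JF g1 g2)) (ZD (CF g1 g2) * ZbD (star (CF g1 g2))) Ω := fun p hp => by
  have hJ := ofReal_JF (f1 := g1) (f2 := g2) (hg.differentiableAt hΩ hp).fst
    (hg.differentiableAt hΩ hp).snd.fst
  simpa [Cplx, hg.ZD_star_eq_zero hp] using hJ

theorem ZD_ZbD_star (hΩ : IsOpen Ω) (hg : IsCRContactOn g1 g2 g3 Ω) :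
    Set.EqOn (ZD (ZbD (star (CF g1 g2)))) ((-2 * I) • TD (star (CF g1 g2))) Ω := fun p hp => by
  have hZbZ := (isDerivationOn_ZbD hΩ).map_eqOn_zero hg.ZD_star_eq_zero hp
  have hcomm := ZD_ZbD_sub_ZbD_ZD hΩ hg.contDiffOn_star_CF hp
  rwa [Pi.sub_apply, hZbZ, Pi.zero_apply, sub_zero] at hcomm

theorem ZD_ZD_ZbD_star (hΩ : IsOpen Ω) (hg : IsCRContactOn g1 g2 g3 Ω) :
    Set.EqOn (ZD (ZD (ZbD (star (CF g1 g2))))) 0 Ω := fun p hp => by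
  have hZ := isDerivationOn_ZD hΩ
  have hT := isDerivationOn_TD hΩ
  rw [hZ.map_congr (hg.ZD_ZbD_star hΩ) hp,
    hZ.map_smul _ (hT.differentiableOn hg.contDiffOn_star_CF) hp,
    Pi.smul_apply, ZD_TD hΩ hg.contDiffOn_star_CF hp, hT.map_eqOn_zero hg.ZD_star_eq_zero hp,
    Pi.zero_apply, smul_zero]

theorem ZD_ZD_mul_ZbD_star (hΩ : IsOpen Ω) (hg : IsCRContactOn g1 g2 g3 Ω) :
    Set.EqOn (ZD (ZD (CF g1 g2) * ZbD (star (CF g1 g2))))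
      (-(ZD (CF g1 g2) * ZD (ZbD (star (CF g1 g2))))) Ω := fun p hp => by
  rw [← (isDerivationOn_ZD hΩ).map_congr (hg.Cplx_JF hΩ) hp, hg.contact.ZD_JF hΩ hg.contDiffOn hp]
  simp only [Pi.smul_apply, Pi.sub_apply, Pi.neg_apply, Pi.mul_apply, Pi.zero_apply, smul_eq_mul,
    hg.ZD_star_eq_zero hp, hg.ZD_ZbD_star hΩ hp]
  ring

theorem ZD_comp (hΩ : IsOpen Ω) (hΩ' : IsOpen Ω') (hg : IsCRContactOn g1 g2 g3 Ω)
    (hmaps : Set.MapsTo (Fmap g1 g2 g3) Ω Ω') {w : Heis → ℂ} (hw : DifferentiableOn ℝ w Ω') :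
    Set.EqOn (ZD (w ∘ Fmap g1 g2 g3)) (ZD w ∘ Fmap g1 g2 g3 * ZD (CF g1 g2)) Ω := fun p hp => by
  have hwp := hw.differentiableAt (hΩ'.mem_nhds (hmaps hp))
  simp [hg.contact.ZD_comp (hg.differentiableAt hΩ hp) hp hwp, hg.ZD_star_eq_zero hp]

theorem ZD_ZD_comp_mul_inv_JF (hΩ : IsOpen Ω) (hΩ' : IsOpen Ω') (hg : IsCRContactOn g1 g2 g3 Ω)
    (hmaps : Set.MapsTo (Fmap g1 g2 g3) Ω Ω') {w : Heis → ℂ} (hw : ContDiffOn ℝ 2 w Ω') :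
    Set.EqOn (ZD (ZD (w ∘ Fmap g1 g2 g3 * (Cplx (JF g1 g2))⁻¹)))
      (ZD (ZD w) ∘ Fmap g1 g2 g3 * ZD (CF g1 g2) ^ 2 * (Cplx (JF g1 g2))⁻¹) Ω := by
  have hZ := isDerivationOn_ZD hΩ
  have hZb := isDerivationOn_ZbD hΩ
  have hdw := hw.differentiableOn two_ne_zero
  have hdZw := (isDerivationOn_ZD hΩ').differentiableOn hw
  have hdg := hg.contDiffOn.differentiableOn two_ne_zero
  have hdZZb : DifferentiableOn ℝ (ZD (ZbD (star (CF g1 g2)))) Ω :=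
    (((isDerivationOn_TD hΩ).differentiableOn hg.contDiffOn_star_CF).const_smul _).congr
      (hg.ZD_ZbD_star hΩ)
  have hJ (h : Heis → ℂ) : Set.EqOn (h * (Cplx (JF g1 g2))⁻¹)
      (h * (ZD (CF g1 g2) * ZbD (star (CF g1 g2)))⁻¹) Ω := fun p hp => by
    simp only [Pi.mul_apply, Pi.inv_apply, hg.Cplx_JF hΩ hp]
  exact (hZ.map_congr (hZ.map_congr (hJ _))).trans <|
    (hZ.map_map_mul_inv (hZ.differentiableOn hg.contDiffOn_CF)
      (hZb.differentiableOn hg.contDiffOn_star_CF) hdZZb (hdw.comp hdg hmaps)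
      (hdZw.comp hdg hmaps) hg.ZD_ne_zero hg.ZbD_star_ne_zero (hg.ZD_ZD_mul_ZbD_star hΩ)
      (hg.ZD_ZD_ZbD_star hΩ) (hg.ZD_comp hΩ hΩ' hmaps hdw)
      (hg.ZD_comp hΩ hΩ' hmaps hdZw)).trans (hJ _).symm

end IsCRContactOn

theorem SCR_eq (f1 f2 : Heis → ℝ) (p : Heis) :
    SCR f1 f2 p = 1 / 2 * Cplx (JF f1 f2) p * ZD (ZD (Cplx (JF f1 f2))⁻¹) p := by
  have hinv : (fun q => (((JF f1 f2 q)⁻¹ : ℝ) : ℂ)) = (Cplx (JF f1 f2))⁻¹ :=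
    funext fun q => ofReal_inv _
  rw [SCR, hinv]
  rfl

theorem stmt_5_general (hΩ : IsOpen Ω) (hΩ' : IsOpen Ω') (hf1 : ContDiffOn ℝ 3 f1 Ω')
    (hf2 : ContDiffOn ℝ 3 f2 Ω') (hJ : ∀ p ∈ Ω', JF f1 f2 p ≠ 0)
    (hg : IsCRContactOn g1 g2 g3 Ω) (hmaps : Set.MapsTo (Fmap g1 g2 g3) Ω Ω') :
    Set.EqOn (SCR (f1 ∘ Fmap g1 g2 g3) (f2 ∘ Fmap g1 g2 g3))
      (SCR f1 f2 ∘ Fmap g1 g2 g3 * ZD (CF g1 g2) ^ 2) Ω := by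
  have hZ := isDerivationOn_ZD hΩ
  have hdiff {f : Heis → ℝ} (hf : ContDiffOn ℝ 3 f Ω') {p : Heis} (hp : p ∈ Ω) :
      DifferentiableAt ℝ f (Fmap g1 g2 g3 p) :=
    (hf.contDiffAt (hΩ'.mem_nhds (hmaps hp))).differentiableAt three_ne_zero
  have hJinv : ContDiffOn ℝ 2 (Cplx (JF f1 f2))⁻¹ Ω' :=
    (contDiffOn_Cplx_JF (n := 2) hΩ' hf1 hf2).inv fun p hp => ofReal_ne_zero.mpr (hJ p hp)
  have hJcomp : Set.EqOn (Cplx (JF (f1 ∘ Fmap g1 g2 g3) (f2 ∘ Fmap g1 g2 g3)))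
      (Cplx (JF f1 f2) ∘ Fmap g1 g2 g3 * Cplx (JF g1 g2)) Ω := fun p hp => by
    simp [Cplx, hg.contact.JF_comp (hg.differentiableAt hΩ hp) hp (hdiff hf1 hp) (hdiff hf2 hp)]
  have hJcompInv : Set.EqOn (Cplx (JF (f1 ∘ Fmap g1 g2 g3) (f2 ∘ Fmap g1 g2 g3)))⁻¹
      ((Cplx (JF f1 f2))⁻¹ ∘ Fmap g1 g2 g3 * (Cplx (JF g1 g2))⁻¹) Ω := fun p hp => by
    simp [hJcomp hp, mul_comm]
  intro p hp
  have hJg : Cplx (JF g1 g2) p ≠ 0 := by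
    simpa [hg.Cplx_JF hΩ hp] using ⟨hg.ZD_ne_zero p hp, hg.ZbD_star_ne_zero p hp⟩
  rw [Pi.mul_apply, Function.comp_apply, SCR_eq, SCR_eq, hJcomp hp,
    hZ.map_congr (hZ.map_congr hJcompInv) hp, hg.ZD_ZD_comp_mul_inv_JF hΩ hΩ' hmaps hJinv hp]
  simp only [Pi.mul_apply, Pi.inv_apply, Pi.pow_apply, Function.comp_apply]
  field_simp

end CRMaps

/-- right cocycle condition for the CR Schwarzian:
S_CR(f ∘ g) = (S_CR(f) ∘ g)·(ZG)² on Ω, where f is a smooth positively oriented contact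
map on Ω' and g : Ω → Ω' is a smooth conformal map. -/
theorem stmt_5 (Ω Ω' : Set Heis) (hΩ : IsOpen Ω) (hΩ' : IsOpen Ω')
    (f1 f2 f3 : Heis → ℝ)
    (hf1 : ContDiffOn ℝ (⊤ : ℕ∞) f1 Ω') (hf2 : ContDiffOn ℝ (⊤ : ℕ∞) f2 Ω')
    (hf3 : ContDiffOn ℝ (⊤ : ℕ∞) f3 Ω')
    (hcont : ContactOn f1 f2 f3 Ω') (hJ : ∀ p ∈ Ω', 0 < JF f1 f2 p)
    (g1 g2 g3 : Heis → ℝ) (hg : ConformalOn g1 g2 g3 Ω)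
    (hmaps : ∀ p ∈ Ω, Fmap g1 g2 g3 p ∈ Ω') :
    ∀ p ∈ Ω,
      SCR (fun q => f1 (Fmap g1 g2 g3 q)) (fun q => f2 (Fmap g1 g2 g3 q)) p
        = SCR f1 f2 (Fmap g1 g2 g3 p) * (ZD (CF g1 g2) p) ^ 2 :=
  fun _ hp => stmt_5_general hΩ hΩ' (contDiffOn_infty.mp hf1 3) (contDiffOn_infty.mp hf2 3)
    (fun q hq => (hJ q hq).ne') (hg.isCRContactOn hΩ) hmaps hp
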